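/- Let α, β, γ be left-c.e. real numbers. If α ≤_qS γ and β ≤_qS γ, then α + β ≤_qS γ. -/

import Mathlib

open Filter Topology

/-- `a` is a computable nondecreasing sequence of rationals converging to the real `x`. -/
def CompApproxSeq (x : ℝ) (a : ℕ → ℚ) : Prop :=
  Computable a ∧ Monotone a ∧ Filter.Tendsto (fun n => (a n : ℝ)) Filter.atTop (nhds x)

/-- A real number is left-c.e. if it has a computable nondecreasing sequence of
rationals converging to it (equivalently, its left cut is c.e.). -/
def LeftCE (x : ℝ) : Prop := ∃ a : ℕ → ℚ, CompApproxSeq x a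

/-- Solovay reducibility: there are a partial computable `f : ℚ →. ℚ` and a positive
integer `d` such that for every rational `q < β`, `f q` is defined, `f q < α`, and
`α - f q < d * (β - q)`. -/
def SRed (α β : ℝ) : Prop :=
  ∃ f : ℚ →. ℚ, Partrec f ∧ ∃ d : ℕ, 0 < d ∧
    ∀ q : ℚ, (q : ℝ) < β → ∃ y ∈ f q, (y : ℝ) < α ∧ α - (y : ℝ) < (d : ℝ) * (β - (q : ℝ))

/-- Quasi Solovay reducibility: there are a partial computable `f : ℚ →. ℚ` and positive
integers `d, l` such that for every rational `q < β`, `f q` is defined, `f q < α`, and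
`(α - f q) ^ l < d * (β - q)`. -/
def QSRed (α β : ℝ) : Prop :=
  ∃ f : ℚ →. ℚ, Partrec f ∧ ∃ d l : ℕ, 0 < d ∧ 0 < l ∧
    ∀ q : ℚ, (q : ℝ) < β → ∃ y ∈ f q, (y : ℝ) < α ∧
      (α - (y : ℝ)) ^ l < (d : ℝ) * (β - (q : ℝ))

/-!
If `(α - y) ^ l < c * x` and `(β - z) ^ m < d * x`, where `x = γ - q ≤ 1`, then both differences
have `l * m`-th power at most a constant times `x`, and so does their sum. Thus `q ↦ f q + f' q`
witnesses the reduction for the `q` within distance `1` of `γ`; for smaller `q`, the value at a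
fixed rational `g ∈ (γ - 1, γ)` serves, since the bound at `g` is stronger than the one required
at `q`.

The sum and the maximum of rationals must moreover be computable for the coding of `ℚ` given by its
`Denumerable` instance, which numbers the rationals by increasing value of the code
`Nat.pair (encode q.num) q.den`. The set of these codes is decidable, so its `n`-th element is
computable from `n`, which makes numerator and denominator computable; the sum is then found by
unbounded search, since its graph is an integer equation in numerators and denominators.
-/

open Encodable

theorem computable_of_graph {α β : Type*} [Primcodable α] [Denumerable β] {f : α → β}
    (hf : ComputablePred fun p : α × β => f p.1 = p.2) : Computable f := by
  classical
  have hcode : ComputablePred fun p : α × ℕ => f p.1 = Denumerable.ofNat β p.2 :=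
    (hf.decide.comp (.pair .fst ((Computable.ofNat β).comp .snd))).computablePred
  have hex (a : α) : ∃ n, f a = Denumerable.ofNat β n := ⟨encode (f a), by simp⟩
  exact ((Computable.ofNat β).comp (Computable.find hcode hex)).of_eq fun a =>
    (Nat.find_spec (hex a)).symm

theorem partrec_bind_map {α β γ σ : Type*} [Primcodable α] [Primcodable β] [Primcodable γ]
    [Primcodable σ] {f : α →. β} {g : α →. γ} {h : β → γ → σ} (hf : Partrec f) (hg : Partrec g)
    (hh : Computable₂ h) : Partrec fun a => (f a).bind fun b => (g a).map (h b) :=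
  hf.bind ((hg.comp .fst).map (hh.comp (.comp .snd .fst) .snd))

theorem computable_nat_count {p : ℕ → Prop} [DecidablePred p] (hp : ComputablePred p) :
    Computable (Nat.count p) := by
  have hstep : Computable fun x : ℕ × ℕ × ℕ => x.2.2 + if p x.2.1 then 1 else 0 :=
    Primrec.nat_add.to_comp.comp (.comp .snd .snd)
      ((hp.decide.comp (.comp .fst .snd)).cond (.const 1) (.const 0) |>.of_eq fun x => by simp)
  refine (Computable.nat_rec .id (.const 0) hstep.to₂).of_eq fun n => ?_
  induction n with
  | zero => simp
  | succ n ih => simpa [Nat.count_succ] using ih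

theorem computable_nat_nth {p : ℕ → Prop} (hp : ComputablePred p)
    (hinf : (Set.ofPred p).Infinite) : Computable (Nat.nth p) := by
  classical
  have hlt : ComputablePred fun x : ℕ × ℕ => x.1 < Nat.count p (x.2 + 1) :=
    (Primrec.nat_lt.decide.to_comp.comp .fst
      ((computable_nat_count hp).comp (Computable.succ.comp .snd))).computablePred
  have hiff (n m : ℕ) : n < Nat.count p (m + 1) ↔ Nat.nth p n ≤ m :=
    (Nat.lt_nth_iff_count_lt hinf).trans Nat.lt_succ_iff
  have hex (n : ℕ) : ∃ m, n < Nat.count p (m + 1) := ⟨_, (hiff n _).2 le_rfl⟩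
  refine (Computable.find hlt hex).of_eq fun n => (Nat.find_eq_iff _).2 ⟨(hiff n _).2 le_rfl, ?_⟩
  exact fun m hm hle => hm.not_ge ((hiff n m).1 hle)

theorem encode_ofNat_ofEncodableOfInfinite {α : Type*} [i : Encodable α] [Infinite α] (n : ℕ) :
    encode (@Denumerable.ofNat α (.ofEncodableOfInfinite α) n) =
      Nat.nth (· ∈ Set.range i.encode) n := by
  let := decidableRangeEncode α
  have hinf : (Set.range i.encode).Infinite := Set.infinite_range_of_injective encode_injective
  have := hinf.to_subtype
  calc encode (@Denumerable.ofNat α (.ofEncodableOfInfinite α) n)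
    _ = (Nat.Subtype.ofNat (Set.range i.encode) n : ℕ) :=
      congrArg Subtype.val ((equivRangeEncode α).apply_symm_apply _)
    _ = (Nat.Subtype.orderIsoOfNat (Set.range i.encode) n : ℕ) :=
      congrArg Subtype.val Nat.Subtype.orderIsoOfNat_apply.symm
    _ = Nat.nth (· ∈ Set.range i.encode) n := (congrFun (Nat.nth_eq_orderIsoOfNat hinf) n).symm

theorem computable_encode_ofEncodableOfInfinite {α : Type*} [i : Encodable α] [Infinite α]
    (hrange : ComputablePred (· ∈ Set.range i.encode)) :
    @Computable α ℕ (@Primcodable.ofDenumerable α (.ofEncodableOfInfinite α)) _ i.encode := by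
  let := Denumerable.ofEncodableOfInfinite α
  have hinf : (Set.range i.encode).Infinite := Set.infinite_range_of_injective encode_injective
  refine ((computable_nat_nth hrange hinf).comp Computable.encode).of_eq fun a => ?_
  rw [← encode_ofNat_ofEncodableOfInfinite, Denumerable.ofNat_encode]

theorem primrecRel_nat_dvd : PrimrecRel ((· ∣ ·) : ℕ → ℕ → Prop) :=
  (Primrec.eq.comp (Primrec.nat_mod.comp .snd .fst) (.const 0)).of_eq fun _ =>
    (Nat.dvd_iff_mod_eq_zero ..).symm

theorem coprime_iff_forall_lt (a b : ℕ) :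
    a.Coprime b ↔ ∀ k < a + b + 1, ¬(k ∣ a ∧ k ∣ b) ∨ k = 1 := by
  refine ⟨fun h k _ => or_iff_not_imp_left.2 fun hk => ?_, fun h => ?_⟩
  · obtain ⟨ha, hb⟩ := not_not.1 hk
    exact Nat.eq_one_of_dvd_coprimes h ha hb
  · have hle : a.gcd b ≤ a + b := by
      rcases Nat.eq_zero_or_pos b with rfl | hb
      · simp
      · exact (Nat.gcd_le_right a hb).trans (Nat.le_add_left b a)
    exact (h _ (Nat.lt_succ_of_le hle)).resolve_left
      (not_not.2 ⟨Nat.gcd_dvd_left a b, Nat.gcd_dvd_right a b⟩)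

theorem primrecRel_nat_coprime : PrimrecRel Nat.Coprime := by
  have hk : PrimrecRel fun (k : ℕ) (x : ℕ × ℕ) => ¬(k ∣ x.1 ∧ k ∣ x.2) ∨ k = 1 :=
    ((primrecRel_nat_dvd.comp .fst (.comp .fst .snd)).and
      (primrecRel_nat_dvd.comp .fst (.comp .snd .snd))).not.or (Primrec.eq.comp .fst (.const 1))
  exact (hk.forall_mem_list.comp
    (Primrec.list_range.comp (Primrec.succ.comp Primrec.nat_add)) .id).of_eq fun x => by
      simp [coprime_iff_forall_lt]

theorem primrec_intEquivNatSumNat : Primrec Equiv.intEquivNatSumNat :=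
  Primrec.encode_iff.1 (Primrec.encode.of_eq fun z => by cases z <;> rfl)

theorem primrec_intEquivNatSumNat_symm : Primrec Equiv.intEquivNatSumNat.symm :=
  Primrec.encode_iff.1 (Primrec.encode.of_eq fun z => by rcases z with n | n <;> rfl)

theorem primrec_int_toNat : Primrec Int.toNat :=
  (Primrec.sumCasesOn primrec_intEquivNatSumNat Primrec₂.right (.const 0)).of_eq fun z => by
    cases z <;> rfl

theorem primrec_int_toNat_neg : Primrec fun z : ℤ => (-z).toNat :=
  (Primrec.sumCasesOn primrec_intEquivNatSumNat (Primrec₂.const 0)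
    (Primrec.succ.comp₂ Primrec₂.right)).of_eq fun z => by
    obtain (_ | _) | _ := z <;> rfl

theorem primrec_int_natAbs : Primrec Int.natAbs :=
  (Primrec.nat_add.comp primrec_int_toNat primrec_int_toNat_neg).of_eq
    Int.toNat_add_toNat_neg_eq_natAbs

theorem primrec_natCast_int : Primrec (Nat.cast : ℕ → ℤ) :=
  (primrec_intEquivNatSumNat_symm.comp Primrec.sumInl).of_eq fun _ => rfl

theorem primrec₂_natCast_sub_natCast : Primrec₂ fun m n : ℕ => (m - n : ℤ) := by
  have hneg : Primrec fun x : ℕ × ℕ => Int.negSucc (x.2 - x.1 - 1) :=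
    (primrec_intEquivNatSumNat_symm.comp <| Primrec.sumInr.comp <|
      Primrec.pred.comp <| Primrec.nat_sub.comp .snd .fst).of_eq fun _ => rfl
  refine (Primrec.ite (Primrec.nat_le.comp .snd .fst)
    (primrec_natCast_int.comp Primrec.nat_sub) hneg).of_eq fun x => ?_
  dsimp only
  split_ifs <;> omega

theorem primrec₂_int_add : Primrec₂ ((· + ·) : ℤ → ℤ → ℤ) := by
  refine (primrec₂_natCast_sub_natCast.comp
    (Primrec.nat_add.comp (primrec_int_toNat.comp .fst) (primrec_int_toNat.comp .snd))
    (Primrec.nat_add.comp (primrec_int_toNat_neg.comp .fst)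
      (primrec_int_toNat_neg.comp .snd))).of_eq fun x => ?_
  dsimp only; omega

theorem primrec₂_int_mul : Primrec₂ ((· * ·) : ℤ → ℤ → ℤ) := by
  have hpos₁ : Primrec fun x : ℤ × ℤ => x.1.toNat := primrec_int_toNat.comp .fst
  have hpos₂ : Primrec fun x : ℤ × ℤ => x.2.toNat := primrec_int_toNat.comp .snd
  have hneg₁ : Primrec fun x : ℤ × ℤ => (-x.1).toNat := primrec_int_toNat_neg.comp .fst
  have hneg₂ : Primrec fun x : ℤ × ℤ => (-x.2).toNat := primrec_int_toNat_neg.comp .snd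
  refine (primrec₂_natCast_sub_natCast.comp
    (Primrec.nat_add.comp (Primrec.nat_mul.comp hpos₁ hpos₂) (Primrec.nat_mul.comp hneg₁ hneg₂))
    (Primrec.nat_add.comp (Primrec.nat_mul.comp hpos₁ hneg₂)
      (Primrec.nat_mul.comp hneg₁ hpos₂))).of_eq fun x => ?_
  conv_rhs => rw [← x.1.toNat_sub_toNat_neg, ← x.2.toNat_sub_toNat_neg]
  push_cast
  ring

theorem primrecRel_int_le : PrimrecRel ((· ≤ ·) : ℤ → ℤ → Prop) :=
  (Primrec.nat_le.comp
    (Primrec.nat_add.comp (primrec_int_toNat.comp .fst) (primrec_int_toNat_neg.comp .snd))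
    (Primrec.nat_add.comp (primrec_int_toNat.comp .snd)
      (primrec_int_toNat_neg.comp .fst))).of_eq fun x => by omega

theorem encode_rat (q : ℚ) : Rat.instEncodable.encode q = Nat.pair (encode q.num) q.den :=
  rfl

theorem mem_range_encode_rat_iff (m : ℕ) : m ∈ Set.range Rat.instEncodable.encode ↔
    m.unpair.2 ≠ 0 ∧ (Denumerable.ofNat ℤ m.unpair.1).natAbs.Coprime m.unpair.2 := by
  constructor
  · rintro ⟨q, rfl⟩
    rw [encode_rat, Nat.unpair_pair, Denumerable.ofNat_encode]
    exact ⟨q.den_nz, q.reduced⟩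
  · rintro ⟨hden, hcoprime⟩
    refine ⟨⟨_, _, hden, hcoprime⟩, ?_⟩
    rw [encode_rat, Denumerable.encode_ofNat, Nat.pair_unpair]

theorem computablePred_mem_range_encode_rat :
    ComputablePred (· ∈ Set.range Rat.instEncodable.encode) := by
  have hnum : Primrec fun m : ℕ => m.unpair.1 := .comp .fst .unpair
  have hden : Primrec fun m : ℕ => m.unpair.2 := .comp .snd .unpair
  exact (((Primrec.eq.comp hden (.const 0)).not.and (primrecRel_nat_coprime.comp
    (primrec_int_natAbs.comp ((Primrec.ofNat ℤ).comp hnum)) hden)).computablePred).of_eq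
      fun m => (mem_range_encode_rat_iff m).symm

theorem computable_encode_rat : Computable Rat.instEncodable.encode :=
  computable_encode_ofEncodableOfInfinite computablePred_mem_range_encode_rat

theorem computable_rat_num : Computable Rat.num :=
  ((Computable.ofNat ℤ).comp
    (Computable.fst.comp (Computable.unpair.comp computable_encode_rat))).of_eq fun q => by
      rw [encode_rat, Nat.unpair_pair, Denumerable.ofNat_encode]

theorem computable_rat_den : Computable Rat.den :=
  (Computable.snd.comp (Computable.unpair.comp computable_encode_rat)).of_eq fun q => by
    simp [encode_rat]

theorem computable_rat_den_cast : Computable fun q : ℚ => (q.den : ℤ) :=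
  primrec_natCast_int.to_comp.comp computable_rat_den

theorem rat_add_eq_iff (r s q : ℚ) : r + s = q ↔
    (r.num * s.den + s.num * r.den) * q.den = q.num * (r.den * s.den) := by
  rw [Rat.add_def']
  conv_lhs => rhs; rw [← Rat.mkRat_self q]
  rw [Rat.mkRat_eq_iff (mul_ne_zero r.den_nz s.den_nz) q.den_nz, Nat.cast_mul]

theorem computable₂_rat_add : Computable₂ ((· + ·) : ℚ → ℚ → ℚ) := by
  refine computable_of_graph ?_
  have hr : Computable fun x : (ℚ × ℚ) × ℚ => x.1.1 := .comp .fst .fst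
  have hs : Computable fun x : (ℚ × ℚ) × ℚ => x.1.2 := .comp .snd .fst
  have hq : Computable fun x : (ℚ × ℚ) × ℚ => x.2 := .snd
  have hadd := primrec₂_int_add.to_comp
  have hmul := primrec₂_int_mul.to_comp
  have hnum := computable_rat_num
  have hden := computable_rat_den_cast
  have hlhs := hmul.comp (hadd.comp (hmul.comp (hnum.comp hr) (hden.comp hs))
    (hmul.comp (hnum.comp hs) (hden.comp hr))) (hden.comp hq)
  have hrhs := hmul.comp (hnum.comp hq) (hmul.comp (hden.comp hr) (hden.comp hs))
  exact (Primrec.eq.decide.to_comp.comp hlhs hrhs).computablePred.of_eq fun x =>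
    (rat_add_eq_iff x.1.1 x.1.2 x.2).symm

theorem computable₂_rat_max : Computable₂ (max : ℚ → ℚ → ℚ) := by
  have hle : Computable fun x : ℚ × ℚ => decide (x.1 ≤ x.2) :=
    (primrecRel_int_le.decide.to_comp.comp
      (primrec₂_int_mul.to_comp.comp (computable_rat_num.comp .fst)
        (computable_rat_den_cast.comp .snd))
      (primrec₂_int_mul.to_comp.comp (computable_rat_num.comp .snd)
        (computable_rat_den_cast.comp .fst))).of_eq fun x => by simp [Rat.le_iff]
  exact (hle.cond .snd .fst).of_eq fun x => by simp [max_def, Bool.cond_decide]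

section Pow

variable {R : Type*} [CommSemiring R] [LinearOrder R] [IsStrictOrderedRing R]
  {a b c d x : R} {l m : ℕ}

theorem pow_mul_lt_pow_mul_of_pow_lt (ha : 0 ≤ a) (hc : 0 ≤ c) (hx₀ : 0 ≤ x) (hx₁ : x ≤ 1)
    (hm : m ≠ 0) (h : a ^ l < c * x) : a ^ (l * m) < c ^ m * x :=
  calc a ^ (l * m) = (a ^ l) ^ m := pow_mul a l m
    _ < (c * x) ^ m := pow_lt_pow_left₀ h (pow_nonneg ha l) hm
    _ = c ^ m * x ^ m := mul_pow c x m
    _ ≤ c ^ m * x := by gcongr; exact pow_le_of_le_one hx₀ hx₁ hm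

theorem add_pow_mul_lt_of_pow_lt [ExistsAddOfLE R] (ha : 0 ≤ a) (hb : 0 ≤ b) (hc : 0 ≤ c)
    (hd : 0 ≤ d) (hx₀ : 0 ≤ x) (hx₁ : x ≤ 1) (hl : l ≠ 0) (hm : m ≠ 0) (hac : a ^ l < c * x)
    (hbd : b ^ m < d * x) : (a + b) ^ (l * m) < 2 ^ (l * m - 1) * (c ^ m + d ^ l) * x := by
  have ha' : a ^ (l * m) < c ^ m * x := pow_mul_lt_pow_mul_of_pow_lt ha hc hx₀ hx₁ hm hac
  have hb' : b ^ (l * m) < d ^ l * x :=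
    mul_comm m l ▸ pow_mul_lt_pow_mul_of_pow_lt hb hd hx₀ hx₁ hl hbd
  calc (a + b) ^ (l * m) ≤ 2 ^ (l * m - 1) * (a ^ (l * m) + b ^ (l * m)) := add_pow_le ha hb _
    _ < 2 ^ (l * m - 1) * (c ^ m * x + d ^ l * x) := by gcongr
    _ = 2 ^ (l * m - 1) * (c ^ m + d ^ l) * x := by ring

end Pow

theorem QSRed.of_forall_ge {α β : ℝ} {f : ℚ →. ℚ} (hf : Partrec f) {d l : ℕ} (hd : 0 < d)
    (hl : 0 < l) {g : ℚ} (hg : (g : ℝ) < β)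
    (h : ∀ q : ℚ, g ≤ q → (q : ℝ) < β →
      ∃ y ∈ f q, (y : ℝ) < α ∧ (α - y) ^ l < d * (β - q)) : QSRed α β := by
  refine ⟨fun q => f (max g q), hf.comp (computable₂_rat_max.comp (.const g) .id), d, l, hd, hl,
    fun q hq => ?_⟩
  obtain ⟨y, hy, hyα, hlt⟩ := h (max g q) (le_max_left g q) (by simp [hg, hq])
  have hq_le : (q : ℝ) ≤ (max g q : ℚ) := by exact_mod_cast le_max_right g q
  exact ⟨y, hy, hyα, hlt.trans_le (by gcongr)⟩

theorem stmt3_general {α β γ : ℝ} (h1 : QSRed α γ) (h2 : QSRed β γ) : QSRed (α + β) γ := by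
  obtain ⟨f, hf, c, l, hc, hl, hfγ⟩ := h1
  obtain ⟨f', hf', d, m, hd, hm, hfγ'⟩ := h2
  obtain ⟨g, hg₁, hgγ⟩ := exists_rat_btwn (sub_one_lt γ)
  have hcd : 0 < 2 ^ (l * m - 1) * (c ^ m + d ^ l) := by positivity
  refine .of_forall_ge (partrec_bind_map hf hf' computable₂_rat_add) hcd (Nat.mul_pos hl hm) hgγ
    fun q hgq hqγ => ?_
  obtain ⟨y, hy, hyα, hlt⟩ := hfγ q hqγ
  obtain ⟨z, hz, hzβ, hlt'⟩ := hfγ' q hqγ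
  have hle_one : γ - q ≤ 1 := by
    have hgq_real : (g : ℝ) ≤ q := by exact_mod_cast hgq
    linarith
  refine ⟨y + z, Part.mem_bind hy (Part.mem_map _ hz), ?_, ?_⟩
  · push_cast
    exact add_lt_add hyα hzβ
  · have hsum := add_pow_mul_lt_of_pow_lt (sub_nonneg.2 hyα.le) (sub_nonneg.2 hzβ.le) c.cast_nonneg
      d.cast_nonneg (sub_nonneg.2 hqγ.le) hle_one hl.ne' hm.ne' hlt hlt'
    push_cast
    rwa [add_sub_add_comm]

/-- For left-c.e. reals, if `α ≤_qS γ` and `β ≤_qS γ` then `α + β ≤_qS γ`. -/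
theorem stmt3 (α β γ : ℝ) (hα : LeftCE α) (hβ : LeftCE β) (hγ : LeftCE γ)
    (h1 : QSRed α γ) (h2 : QSRed β γ) : QSRed (α + β) γ :=
  stmt3_general h1 h2
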